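/- Let ρ₀ satisfy the stated first-order equation with limits a and b at ∓∞. Then ∫_ℝ ρ₀'(z)² dz = (√2/15)(b − a)(b⁴ + a⁴ + b³a + a³b − 4a²b²). -/

import Mathlib

open Filter

/-- If `ρ₀' = (√2/2)(ρ₀² − a²)(b² − ρ₀²)` with `a < ρ₀ < b` and limits
`a` at `−∞`, `b` at `+∞`, then
`∫_ℝ ρ₀'(z)² dz = (√2/15)(b − a)(b⁴ + a⁴ + b³a + a³b − 4a²b²)`. -/
theorem statement5 (a b : ℝ) (ha : 0 < a) (hab : a < b) (ρ₀ : ℝ → ℝ)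
    (hreg : ContDiff ℝ 1 ρ₀)
    (hderiv : ∀ z, deriv ρ₀ z =
      Real.sqrt 2 / 2 * ((ρ₀ z) ^ 2 - a ^ 2) * (b ^ 2 - (ρ₀ z) ^ 2))
    (hbnd : ∀ z, a < ρ₀ z ∧ ρ₀ z < b)
    (hbot : Tendsto ρ₀ atBot (nhds a))
    (htop : Tendsto ρ₀ atTop (nhds b)) :
    (∫ z : ℝ, (deriv ρ₀ z) ^ 2) =
      Real.sqrt 2 / 15 * (b - a) * (b ^ 4 + a ^ 4 + b ^ 3 * a + a ^ 3 * b - 4 * a ^ 2 * b ^ 2) := by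
  have hρ : ∀ z, HasDerivAt ρ₀ (deriv ρ₀ z) z := fun z =>
    ((hreg.differentiable (by norm_num)) z).hasDerivAt
  let G : ℝ → ℝ := fun s => Real.sqrt 2 / 2 * ((a^2+b^2) * s^3 / 3 - s^5 / 5 - a^2*b^2*s)
  have hG : ∀ z, HasDerivAt (fun z => G (ρ₀ z)) ((deriv ρ₀ z)^2) z := by
    intro z
    have h := (((((hρ z).pow 3).const_mul (a^2+b^2)).div_const 3).sub
      (((hρ z).pow 5).div_const 5)).sub ((hρ z).const_mul (a^2*b^2))
    have h2 := h.const_mul (Real.sqrt 2 / 2)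
    refine h2.congr_deriv ?_
    have e : (deriv ρ₀ z)^2 = deriv ρ₀ z *
      (Real.sqrt 2 / 2 * ((ρ₀ z) ^ 2 - a ^ 2) * (b ^ 2 - (ρ₀ z) ^ 2)) := by
      rw [← hderiv, sq]
    rw [e]
    push_cast
    ring
  have hGc : Continuous G := by fun_prop
  have hb : Tendsto (fun z => G (ρ₀ z)) atBot (nhds (G a)) := (hGc.tendsto a).comp hbot
  have ht : Tendsto (fun z => G (ρ₀ z)) atTop (nhds (G b)) := (hGc.tendsto b).comp htop
  have i1 : MeasureTheory.IntegrableOn (fun z => (deriv ρ₀ z)^2) (Set.Ioi 0) :=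
    MeasureTheory.integrableOn_Ioi_deriv_of_nonneg' (fun x _ => hG x)
      (fun x _ => sq_nonneg _) ht
  have i2 : MeasureTheory.IntegrableOn (fun z => (deriv ρ₀ (-z))^2) (Set.Ioi 0) := by
    refine MeasureTheory.integrableOn_Ioi_deriv_of_nonneg' (g := fun z => -G (ρ₀ (-z)))
      (l := -G a) (fun x _ => ?_) (fun x _ => sq_nonneg _) ?_
    · have h := ((hG (-x)).comp x (hasDerivAt_neg x)).neg
      exact h.congr_deriv (by ring)
    · exact (hb.comp tendsto_neg_atTop_atBot).neg
  have i3 : MeasureTheory.IntegrableOn (fun z => (deriv ρ₀ z)^2) (Set.Iic 0) := by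
    have := i2.comp_neg
    rw [integrableOn_Iic_iff_integrableOn_Iio]
    simpa using this
  have hi : MeasureTheory.Integrable (fun z => (deriv ρ₀ z)^2) := by
    rw [← MeasureTheory.integrableOn_univ, ← Set.Iic_union_Ioi (a := (0:ℝ))]
    exact i3.union i1
  rw [MeasureTheory.integral_of_hasDerivAt_of_tendsto hG hi hb ht]
  simp only [G]
  ring
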